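/- Let G be a finite connected simple graph. If G has an even cycle of length ≥ 8 possessing a chord and G has no cycle of length 4, then deg(P_G) ≥ 3. -/

import Mathlib

open MvPolynomial Pointwise

/-- `ρ({i,j}) = e_i + e_j` : the 0/1 (incidence) vector of an edge. -/
noncomputable def rho {N : ℕ} (e : Sym2 (Fin N)) : Fin N → ℝ :=
  fun v => if v ∈ e then 1 else 0

/-- The edge polytope of a graph on `Fin N`. -/
noncomputable def edgePolytope {N : ℕ} (G : SimpleGraph (Fin N)) : Set (Fin N → ℝ) :=
  convexHull ℝ (rho '' G.edgeSet)

/-- Number of lattice points of the `t`-th dilation (`= 1` for `t = 0`). -/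
noncomputable def ehr {N : ℕ} (P : Set (Fin N → ℝ)) (t : ℕ) : ℕ :=
  if t = 0 then 1 else Nat.card {x : Fin N → ℤ // (fun i => (x i : ℝ)) ∈ (t : ℝ) • P}

/-- The dimension of a polytope: the rank of the direction of its affine span. -/
noncomputable def polyDim {N : ℕ} (P : Set (Fin N → ℝ)) : ℕ :=
  Module.finrank ℝ (affineSpan ℝ P).direction

/-- The `i`-th coefficient of `(1-λ)^{d+1} (1 + Σ_{t≥1} |tP ∩ Z^N| λ^t)`. -/
noncomputable def deltaCoeff {N : ℕ} (P : Set (Fin N → ℝ)) (i : ℕ) : ℤ :=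
  ∑ j ∈ Finset.range (i + 1),
    (-1 : ℤ) ^ j * (Nat.choose (polyDim P + 1) j : ℤ) * (ehr P (i - j) : ℤ)

/-- The degree of the δ-polynomial of `P`. -/
noncomputable def polyDeg {N : ℕ} (P : Set (Fin N → ℝ)) : ℕ :=
  sSup {i : ℕ | deltaCoeff P i ≠ 0}

/-- The monomial `t_i t_j s` attached to an edge `{i,j}`; `s` is the variable `none`. -/
noncomputable def edgeMonom (K : Type*) [Field K] {V : Type*} (e : Sym2 V) :
    MvPolynomial (Option V) K :=
  Sym2.lift ⟨fun i j => X (some i) * X (some j) * X none, fun i j => by ring⟩ e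

/-- The edge ring `K[G]`, the subalgebra generated by the monomials `t^{ρ(e)} s`. -/
noncomputable def edgeRing (K : Type*) [Field K] {V : Type*} (G : SimpleGraph V) :
    Subalgebra K (MvPolynomial (Option V) K) :=
  Algebra.adjoin K (edgeMonom K '' G.edgeSet)

/-- The toric ideal `I_G`: kernel of `x_e ↦ t^{ρ(e)} s`. -/
noncomputable def toricIdeal (K : Type*) [Field K] {V : Type*} (G : SimpleGraph V) :
    Ideal (MvPolynomial G.edgeSet K) :=
  RingHom.ker (MvPolynomial.aeval (fun e : G.edgeSet => edgeMonom K (e : Sym2 V)) :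
    MvPolynomial G.edgeSet K →ₐ[K] MvPolynomial (Option V) K)

/-- `S/I` has a `q`-linear (minimal graded free) resolution: there is a graded free
resolution of `S/I` in which the free module at homological step `i ≥ 1` is generated
in the single degree `q + i - 1`; equivalently all Betti numbers `β_{i,j}` with
`j ≠ q + i - 1` vanish. -/
def HasLinearResolution {σ K : Type*} [Field K] (q : ℕ)
    (I : Ideal (MvPolynomial σ K)) : Prop :=
  ∃ (b : ℕ → ℕ)
    (φ₀ : (Fin (b 0) →₀ MvPolynomial σ K) →ₗ[MvPolynomial σ K] MvPolynomial σ K)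
    (φ : ∀ i : ℕ,
      (Fin (b (i + 1)) →₀ MvPolynomial σ K) →ₗ[MvPolynomial σ K]
        (Fin (b i) →₀ MvPolynomial σ K)),
    LinearMap.range φ₀ = I ∧
    LinearMap.ker φ₀ = LinearMap.range (φ 0) ∧
    (∀ i, LinearMap.ker (φ i) = LinearMap.range (φ (i + 1))) ∧
    (∀ j, (φ₀ (Finsupp.single j 1)).IsHomogeneous q) ∧
    (∀ i j k, ((φ i (Finsupp.single j 1)) k).IsHomogeneous 1)

/-!
Cover the lattice points of the cone over a lattice polytope by half-open simplicial cones: take a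
regular triangulation, move the whole cone by an infinitesimal multiple of a generic vector `q`, and
keep in each simplicial cone the points that are moved into its interior. Every lattice point is
kept exactly once. The lattice points of a half-open cone are generated freely by those of its
half-open parallelepiped, so the coefficient of `λ ^ n` in the δ-polynomial counts the lattice
points of height `n` in these parallelepipeds, and nothing cancels.

Consequently, if a vertex of the polytope has `k` negative coordinates with respect to linearly
independent vertices, then the degree is at least `k`: choose a triangulation containing the simplex
of these vertices and `q` close to the given vertex; then at least `k` facets of that simplicial
cone are removed, and the sum of the generators opposite to the removed facets lies in the
half-open parallelepiped.

In an even cycle of length `2 * k` the closing edge is the alternating sum of the other `2 * k - 1`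
edges, whose vectors are linearly independent; `k - 1` of the signs are negative.
-/

open Filter Function Topology
open scoped Finset

/-- The generating function counting the elements of `S` at each natural height. Only locally
finite sets are meant: an infinite level contributes `0`. -/
noncomputable def levelSeries {M : Type*} (h : M → ℝ) (S : Set M) : PowerSeries ℤ :=
  PowerSeries.mk fun n => ({x ∈ S | h x = n}.ncard : ℤ)

/-- The elements of `S` that are not translates by some `a j`, `j ∈ J`, of another element of `S`.
When translation acts freely they are the free generators of `S`. -/
def translationGenerators {M ι : Type*} [Sub M] (a : ι → M) (J : Finset ι) (S : Set M) : Set M :=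
  {x ∈ S | ∀ j ∈ J, x - a j ∉ S}

section LevelSeries

variable {M ι : Type*} {h : M → ℝ} {S : Set M}

theorem coeff_levelSeries (n : ℕ) :
    PowerSeries.coeff n (levelSeries h S) = ({x ∈ S | h x = n}.ncard : ℤ) :=
  PowerSeries.coeff_mk ..

theorem levelSeries_iUnion {κ : Type*} [Fintype κ] {T : κ → Set M}
    (hfin : ∀ n : ℕ, {x ∈ ⋃ k, T k | h x = n}.Finite) (hdisj : Pairwise (Disjoint on T)) :
    levelSeries h (⋃ k, T k) = ∑ k, levelSeries h (T k) := by
  ext n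
  have hlevel : {x ∈ ⋃ k, T k | h x = n} = ⋃ k, {x ∈ T k | h x = n} := by
    ext x
    simp
  rw [map_sum, coeff_levelSeries, hlevel,
    Set.ncard_iUnion_of_finite (fun k => ?_) fun i j hij => ?_, finsum_eq_sum_of_fintype,
    Nat.cast_sum]
  · simp only [coeff_levelSeries]
  · exact (hfin n).subset fun x hx => ⟨Set.mem_iUnion_of_mem k hx.1, hx.2⟩
  · exact (hdisj hij).mono (fun _ hx => hx.1) fun _ hx => hx.1

theorem levelSeries_preimage {M' : Type*} {f : M' → M} (hf : Injective f)
    (hS : S ⊆ Set.range f) : levelSeries (h ∘ f) (f ⁻¹' S) = levelSeries h S := by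
  ext n
  rw [coeff_levelSeries, coeff_levelSeries]
  congr 1
  exact Set.ncard_preimage_of_injective_subset_range (s := {x ∈ S | h x = n}) hf
    fun x hx => hS hx.1

variable [AddCommGroup M] {a : ι → M}

theorem one_sub_X_mul_levelSeries {b : M} (hadd : ∀ x ∈ S, x + b ∈ S)
    (hb : ∀ x, h (x + b) = h x + 1) (hnonneg : ∀ x ∈ S, 0 ≤ h x)
    (hfin : ∀ n : ℕ, {x ∈ S | h x = n}.Finite) :
    (1 - PowerSeries.X) * levelSeries h S = levelSeries h {x ∈ S | x - b ∉ S} := by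
  have hshift : ∀ x, h (x - b) = h x - 1 := fun x => by
    rw [eq_sub_iff_add_eq, ← hb, sub_add_cancel]
  ext n
  rw [sub_mul, one_mul, map_sub, coeff_levelSeries, coeff_levelSeries]
  cases n with
  | zero =>
    have hlevel : {x ∈ {x ∈ S | x - b ∉ S} | h x = (0 : ℕ)} = {x ∈ S | h x = (0 : ℕ)} := by
      refine Set.Subset.antisymm (fun x hx => ⟨hx.1.1, hx.2⟩)
        fun x hx => ⟨⟨hx.1, fun hxb => ?_⟩, hx.2⟩
      have hneg := hnonneg _ hxb
      rw [hshift, hx.2] at hneg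
      norm_num at hneg
    rw [hlevel, PowerSeries.coeff_zero_X_mul, sub_zero]
  | succ n =>
    have hlevel : {x ∈ S | h x = (n + 1 : ℕ)} =
        {x ∈ {x ∈ S | x - b ∉ S} | h x = (n + 1 : ℕ)} ∪ (· + b) '' {x ∈ S | h x = n} := by
      ext x
      constructor
      · rintro ⟨hx, hxn⟩
        by_cases hxb : x - b ∈ S
        · exact Or.inr ⟨x - b, ⟨hxb, by rw [hshift, hxn]; simp⟩, sub_add_cancel x b⟩
        · exact Or.inl ⟨⟨hx, hxb⟩, hxn⟩
      · rintro (⟨⟨hx, -⟩, hxn⟩ | ⟨y, ⟨hy, hyn⟩, rfl⟩)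
        · exact ⟨hx, hxn⟩
        · exact ⟨hadd y hy, by rw [hb, hyn]; simp⟩
    have hdisj : Disjoint {x ∈ {x ∈ S | x - b ∉ S} | h x = (n + 1 : ℕ)}
        ((· + b) '' {x ∈ S | h x = n}) := by
      rw [Set.disjoint_left]
      rintro _ ⟨⟨-, hyb⟩, -⟩ ⟨y, ⟨hy, -⟩, rfl⟩
      exact hyb (by simpa using hy)
    rw [PowerSeries.coeff_succ_X_mul, coeff_levelSeries, sub_eq_iff_eq_add, hlevel,
      Set.ncard_union_eq hdisj ((hfin _).subset fun x hx => ⟨hx.1.1, hx.2⟩) ((hfin n).image _),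
      Set.ncard_image_of_injective _ (add_left_injective b), Nat.cast_add]

theorem translationGenerators_insert [DecidableEq ι] {J : Finset ι} {b : ι}
    (hadd : ∀ x ∈ S, x + a b ∈ S) :
    translationGenerators a (insert b J) S =
      {x ∈ translationGenerators a J S | x - a b ∉ translationGenerators a J S} := by
  ext x
  simp only [translationGenerators, Set.mem_ofPred_eq, Finset.forall_mem_insert]
  refine ⟨fun ⟨hx, hxb, hxJ⟩ => ⟨⟨hx, hxJ⟩, fun hxb' => hxb hxb'.1⟩,
    fun ⟨⟨hx, hxJ⟩, hxb⟩ => ⟨hx, fun hxb' => hxb ⟨hxb', fun j hj hxbj => hxJ j hj ?_⟩, hxJ⟩⟩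
  rw [← sub_add_cancel (x - a j) (a b), sub_right_comm]
  exact hadd _ hxbj

theorem add_mem_translationGenerators {J : Finset ι} {b : M} (hadd : ∀ x ∈ S, x + b ∈ S)
    (hinter : ∀ j ∈ J, ∀ x, x + b ∈ S → x + a j ∈ S → x ∈ S) {x : M}
    (hx : x ∈ translationGenerators a J S) : x + b ∈ translationGenerators a J S := by
  refine ⟨hadd x hx.1, fun j hj hxj => hx.2 j hj (hinter j hj _ ?_ ?_)⟩
  · rwa [sub_add_eq_add_sub]
  · rw [sub_add_cancel]
    exact hx.1

theorem one_sub_X_pow_mul_levelSeries {J : Finset ι} (hadd : ∀ j ∈ J, ∀ x ∈ S, x + a j ∈ S)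
    (hinter : ∀ i ∈ J, ∀ j ∈ J, i ≠ j → ∀ x, x + a i ∈ S → x + a j ∈ S → x ∈ S)
    (ha : ∀ j ∈ J, ∀ x, h (x + a j) = h x + 1) (hnonneg : ∀ x ∈ S, 0 ≤ h x)
    (hfin : ∀ n : ℕ, {x ∈ S | h x = n}.Finite) :
    (1 - PowerSeries.X) ^ #J * levelSeries h S =
      levelSeries h (translationGenerators a J S) := by
  classical
  induction J using Finset.induction_on with
  | empty => simp [translationGenerators]
  | insert b J hb ih =>
    simp only [Finset.forall_mem_insert] at hadd hinter ha
    rw [Finset.card_insert_of_notMem hb, pow_succ', mul_assoc,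
      ih hadd.2 (fun i hi => (hinter.2 i hi).2) ha.2, translationGenerators_insert hadd.1]
    refine one_sub_X_mul_levelSeries (fun x hx => ?_) ha.1 (fun x hx => hnonneg x hx.1)
      fun n => (hfin n).subset fun x hx => ⟨hx.1.1, hx.2⟩
    exact add_mem_translationGenerators hadd.1
      (fun j hj => hinter.1.2 j hj fun hbj => hb (hbj ▸ hj)) hx

end LevelSeries

/-- A subset of the index set along which the family `a` is a basis of the ambient space. -/
@[ext]
structure Subbasis (K : Type*) {ι W : Type*} [Field K] [AddCommGroup W] [Module K W]
    (a : ι → W) where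
  indices : Finset ι
  linearIndepOn : LinearIndepOn K a (indices : Set ι)
  span_eq_top : Submodule.span K (a '' indices) = ⊤

namespace Subbasis

variable {K ι W : Type*} [Field K] [AddCommGroup W] [Module K W] {a : ι → W}

theorem indices_injective : Injective (indices : Subbasis K a → Finset ι) := fun _ _ => Subbasis.ext

instance [Finite ι] : Finite (Subbasis K a) :=
  Finite.of_injective _ indices_injective

theorem exists_subset_indices [Finite ι] (hspan : Submodule.span K (Set.range a) = ⊤) {I : Set ι}
    (hI : LinearIndepOn K a I) : ∃ B : Subbasis K a, I ⊆ B.indices := by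
  obtain ⟨b, -, hIb, hb, hli⟩ := exists_linearIndepOn_extension hI (Set.subset_univ I)
  refine ⟨⟨b.toFinite.toFinset, by simpa using hli, ?_⟩, by simpa using hIb⟩
  rw [eq_top_iff, ← hspan, Submodule.span_le]
  simpa using hb

variable (B : Subbasis K a)

/-- The vectors of a subbasis as a `Module.Basis`. -/
noncomputable def basis : Module.Basis B.indices K W :=
  Module.Basis.mk (v := fun i : B.indices => a i) B.linearIndepOn <| by
    rw [← B.span_eq_top, Set.image_eq_range]
    rfl

theorem basis_apply (i : B.indices) : B.basis i = a i :=
  Module.Basis.mk_apply ..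

theorem card_eq_finrank : #B.indices = Module.finrank K W := by
  rw [Module.finrank_eq_card_basis B.basis, Fintype.card_coe]

/-- The coordinates with respect to a subbasis, extended by zero to the whole index set, so that
the coordinates for different subbases can be compared. -/
noncomputable def coords : W →ₗ[K] ι → K :=
  ExtendByZero.linearMap K ((↑) : B.indices → ι) ∘ₗ B.basis.equivFun

variable {B}

theorem coords_of_notMem (x : W) {i : ι} (hi : i ∉ B.indices) : B.coords x i = 0 :=
  extend_apply' _ _ _ fun ⟨j, hj⟩ => hi (hj ▸ j.2)

theorem coords_apply_self [DecidableEq ι] {i : ι} (hi : i ∈ B.indices) :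
    B.coords (a i) = Pi.single i 1 := by
  ext j
  by_cases hj : j ∈ B.indices
  · have hval : B.coords (a i) j = B.basis.repr (B.basis ⟨i, hi⟩) ⟨j, hj⟩ := by
      rw [basis_apply]
      exact Subtype.val_injective.extend_apply _ _ (⟨j, hj⟩ : B.indices)
    rw [hval, B.basis.repr_self, Finsupp.single_apply, Pi.single_apply]
    simp [eq_comm]
  · rw [coords_of_notMem _ hj, Pi.single_eq_of_ne fun hji : j = i => hj (hji ▸ hi)]

variable [Fintype ι]

theorem coords_sum_smul {c : ι → K} (hc : ∀ i ∉ B.indices, c i = 0) :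
    B.coords (∑ i, c i • a i) = c := by
  classical
  calc B.coords (∑ i, c i • a i) = ∑ i, c i • B.coords (a i) := by simp only [map_sum, map_smul]
    _ = ∑ i, c i • Pi.single i 1 := Finset.sum_congr rfl fun i _ => by
        by_cases hi : i ∈ B.indices
        · rw [coords_apply_self hi]
        · rw [hc i hi, zero_smul, zero_smul]
    _ = c := by
        ext j
        simp [Finset.sum_apply, Pi.single_apply]

theorem sum_coords_smul (B : Subbasis K a) (x : W) : ∑ i, B.coords x i • a i = x := by
  conv_rhs => rw [← B.basis.sum_equivFun x]
  rw [← Finset.sum_subset (Finset.subset_univ B.indices) fun i _ hi => by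
    rw [coords_of_notMem x hi, zero_smul], ← Finset.sum_coe_sort]
  refine Finset.sum_congr rfl fun i _ => ?_
  rw [basis_apply]
  congr 1
  exact Subtype.val_injective.extend_apply _ _ i

theorem sum_coords (B : Subbasis K a) {h : W →ₗ[K] K} (ha : ∀ i, h (a i) = 1) (x : W) :
    ∑ i, B.coords x i = h x := by
  conv_rhs => rw [← B.sum_coords_smul x]
  simp [ha]

/-- The reduced cost of `e` in the linear program of minimizing the cost `∑ i, c i * w i` of a
representation `∑ i, c i • a i` of a given vector: the excess of the cost of `a e` over that of its
expression in the subbasis. -/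
noncomputable def reducedCost (B : Subbasis K a) (e : ι) : (ι → K) →ₗ[K] K :=
  LinearMap.proj (R := K) (φ := fun _ => K) e - Fintype.linearCombination K (B.coords (a e))

theorem reducedCost_apply (e : ι) (w : ι → K) :
    B.reducedCost e w = w e - ∑ i, B.coords (a e) i * w i := by
  simp [reducedCost, Fintype.linearCombination_apply, mul_comm]

theorem reducedCost_of_mem {e : ι} (he : e ∈ B.indices) : B.reducedCost e = 0 := by
  classical
  refine LinearMap.ext fun w => ?_
  simp [reducedCost_apply, coords_apply_self he, Pi.single_apply]

theorem sum_mul_eq_add_sum_mul_reducedCost (B : Subbasis K a) (c w : ι → K) :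
    ∑ i, c i * w i =
      ∑ i, B.coords (∑ e, c e • a e) i * w i + ∑ e, c e * B.reducedCost e w := by
  simp only [reducedCost_apply, mul_sub, Finset.sum_sub_distrib, map_sum, map_smul,
    Finset.sum_apply, Pi.smul_apply, smul_eq_mul, Finset.sum_mul, Finset.mul_sum, mul_assoc]
  rw [Finset.sum_comm, add_sub_cancel]

end Subbasis

section LinearProgramming

variable {ι W : Type*} [Fintype ι] [AddCommGroup W] [Module ℝ W]

theorem eventually_pos_add_mul {t : ℝ} (ht : 0 < t) (s : ℝ) : ∀ᶠ ε in 𝓝[>] 0, 0 < t + ε * s := by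
  have hcont : Continuous fun ε : ℝ => t + ε * s := by fun_prop
  exact ((hcont.tendsto' 0 t (by simp)).mono_left nhdsWithin_le_nhds).eventually (lt_mem_nhds ht)

theorem eventually_add_mul_ne_zero (t : ℝ) {s : ℝ} (hs : s ≠ 0) :
    ∀ᶠ ε in 𝓝[>] 0, t + ε * s ≠ 0 := by
  rcases lt_trichotomy t 0 with ht | rfl | ht
  · filter_upwards [eventually_pos_add_mul (neg_pos.2 ht) (-s)] with ε hε
    linarith
  · filter_upwards [self_mem_nhdsWithin] with ε hε
    simpa [hs] using ne_of_gt hε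
  · exact (eventually_pos_add_mul ht s).mono fun _ h => h.ne'

theorem eventually_pos_or_eventually_nonpos (t s : ℝ) :
    (∀ᶠ ε in 𝓝[>] 0, 0 < t + ε * s) ∨ ∀ᶠ ε in 𝓝[>] 0, t + ε * s ≤ 0 := by
  rcases lt_trichotomy t 0 with ht | rfl | ht
  · exact Or.inr ((eventually_pos_add_mul (neg_pos.2 ht) (-s)).mono fun ε hε => by linarith)
  · simp only [zero_add]
    rcases lt_or_ge 0 s with hs | hs
    · exact Or.inl (eventually_mem_nhdsWithin.mono fun ε hε => mul_pos hε hs)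
    · exact Or.inr (eventually_mem_nhdsWithin.mono fun ε hε =>
        mul_nonpos_of_nonneg_of_nonpos (le_of_lt hε) hs)
  · exact Or.inl (eventually_pos_add_mul ht s)

theorem exists_extremePoint_isMinOn {E : Type*} [AddCommGroup E] [Module ℝ E] [TopologicalSpace E]
    [T2Space E] [IsTopologicalAddGroup E] [ContinuousSMul ℝ E] [LocallyConvexSpace ℝ E]
    {s : Set E} (hs : IsCompact s) (hne : s.Nonempty) (l : E →L[ℝ] ℝ) :
    ∃ x ∈ s.extremePoints ℝ, IsMinOn l s x := by
  have hexposed : IsExposed ℝ s ((-l).toExposed s) := ContinuousLinearMap.toExposed.isExposed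
  obtain ⟨m, hm, hmin⟩ := hs.exists_isMinOn hne l.continuous.continuousOn
  obtain ⟨x, hx⟩ := (hexposed.isCompact hs).extremePoints_nonempty
    ⟨m, hm, fun y hy => neg_le_neg (hmin hy)⟩
  exact ⟨x, hexposed.isExtreme.extremePoints_subset_extremePoints hx,
    fun y hy => neg_le_neg_iff.1 (hx.1.2 y hy)⟩

/-- The polyhedron of nonnegative representations of `z` in terms of the family `a`. -/
def feasibleSet (a : ι → W) (z : W) : Set (ι → ℝ) :=
  {c | 0 ≤ c ∧ ∑ i, c i • a i = z}

/-- Genericity with respect to the finitely many hyperplanes spanned by members of `a`, expressed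
through the coordinates for all subbases. -/
def IsGeneric (a : ι → W) (z : W) : Prop :=
  ∀ B : Subbasis ℝ a, ∀ i ∈ B.indices, B.coords z i ≠ 0

/-- A subbasis is optimal for the weight `w` if no reduced cost is negative. For generic `w`
the cones over the optimal subbases are the maximal cells of a regular triangulation. -/
def Subbasis.IsOptimal {a : ι → W} (B : Subbasis ℝ a) (w : ι → ℝ) : Prop :=
  ∀ e, 0 ≤ B.reducedCost e w

variable {a : ι → W} {z : W}

theorem mem_hull_range_iff_feasibleSet_nonempty :
    z ∈ PointedCone.hull ℝ (Set.range a) ↔ (feasibleSet a z).Nonempty := by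
  rw [PointedCone.hull, Submodule.mem_span_range_iff_exists_fun]
  exact ⟨fun ⟨c, hc⟩ => ⟨fun i => c i, fun i => (c i).2, hc⟩,
    fun ⟨c, hc, hcz⟩ => ⟨fun i => ⟨c i, hc i⟩, hcz⟩⟩

theorem isCompact_feasibleSet {h : W →ₗ[ℝ] ℝ} (ha : ∀ i, h (a i) = 1) :
    IsCompact (feasibleSet a z) := by
  rcases (feasibleSet a z).eq_empty_or_nonempty with hempty | ⟨c₀, -, hc₀⟩
  · rw [hempty]
    exact isCompact_empty
  have hker : IsClosed (LinearMap.ker (Fintype.linearCombination ℝ a) : Set (ι → ℝ)) :=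
    Submodule.closed_of_finiteDimensional _
  have heq : feasibleSet a z =
      Set.Ici 0 ∩ (· - c₀) ⁻¹' LinearMap.ker (Fintype.linearCombination ℝ a) := by
    ext c
    simp [feasibleSet, Fintype.linearCombination_apply, sub_smul, Finset.sum_sub_distrib,
      sub_eq_zero, hc₀]
  refine (isCompact_Icc (a := (0 : ι → ℝ)) (b := fun _ => h z)).of_isClosed_subset ?_
    fun c ⟨hc, hcz⟩ => ⟨hc, ?_⟩
  · rw [heq]
    exact isClosed_Ici.inter (hker.preimage (by fun_prop))
  · have hsum : h z = ∑ i, c i := by simp [← hcz, ha]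
    exact fun i => hsum ▸ Finset.single_le_sum (fun j _ => hc j) (Finset.mem_univ i)

theorem eventually_add_smul_mem_feasibleSet {c r : ι → ℝ} (hc : c ∈ feasibleSet a z)
    (hr : ∑ i, r i • a i = 0) (hneg : ∀ i, r i < 0 → 0 < c i) :
    ∀ᶠ η : ℝ in 𝓝[>] 0, c + η • r ∈ feasibleSet a z := by
  have hnonneg : ∀ᶠ η : ℝ in 𝓝[>] 0, ∀ i, 0 ≤ (c + η • r) i := by
    refine eventually_all.2 fun i => ?_
    by_cases hi : r i < 0
    · exact (eventually_pos_add_mul (hneg i hi) (r i)).mono fun _ h => h.le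
    · filter_upwards [self_mem_nhdsWithin] with η hη
      exact add_nonneg (hc.1 i) (mul_nonneg (le_of_lt hη) (not_lt.1 hi))
  filter_upwards [hnonneg] with η hη
  refine ⟨hη, ?_⟩
  simp only [Pi.add_apply, Pi.smul_apply, smul_eq_mul, add_smul, mul_smul,
    Finset.sum_add_distrib, ← Finset.smul_sum, hr, hc.2, smul_zero, add_zero]

theorem linearIndepOn_support_of_mem_extremePoints {c : ι → ℝ}
    (hc : c ∈ (feasibleSet a z).extremePoints ℝ) : LinearIndepOn ℝ a (support c) := by
  rw [linearIndepOn_iff]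
  intro l hl hl0
  have hsum : ∑ i, l i • a i = 0 := by
    rwa [Finsupp.linearCombination_apply, Finsupp.sum_fintype _ _ fun i => zero_smul ℝ (a i)] at hl0
  have hpos : ∀ i, l i ≠ 0 → 0 < c i := fun i hi =>
    (hc.1.1 i).lt_of_ne' ((Finsupp.mem_supported ℝ l).1 hl (Finsupp.mem_support_iff.2 hi))
  have hplus := eventually_add_smul_mem_feasibleSet hc.1 hsum fun i hi => hpos i hi.ne
  have hminus := eventually_add_smul_mem_feasibleSet (r := -l) hc.1 (by simp [hsum])
    fun i hi => hpos i (by simpa using hi.ne')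
  obtain ⟨η, ⟨hη, hη'⟩, hη0⟩ := ((hplus.and hminus).and self_mem_nhdsWithin).exists
  have hmid : c ∈ openSegment ℝ (c + η • ⇑l) (c + η • -⇑l) :=
    ⟨1 / 2, 1 / 2, by norm_num, by norm_num, by norm_num, by module⟩
  have hzero : η • ⇑l = 0 := by simpa using hc.2 hη hη' hmid
  exact DFunLike.coe_injective ((smul_eq_zero.1 hzero).resolve_left (ne_of_gt hη0))

theorem exists_isOptimal_coords_nonneg (hspan : Submodule.span ℝ (Set.range a) = ⊤)
    {h : W →ₗ[ℝ] ℝ} (ha : ∀ i, h (a i) = 1) (w : ι → ℝ) (hz : IsGeneric a z)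
    (hcone : z ∈ PointedCone.hull ℝ (Set.range a)) :
    ∃ B : Subbasis ℝ a, B.IsOptimal w ∧ 0 ≤ B.coords z := by
  classical
  let cost := (Fintype.linearCombination ℝ w).toContinuousLinearMap
  have hcost : ∀ c, cost c = ∑ i, c i * w i := fun c => rfl
  obtain ⟨c, hc, hmin⟩ := exists_extremePoint_isMinOn (isCompact_feasibleSet ha)
    (mem_hull_range_iff_feasibleSet_nonempty.1 hcone) cost
  obtain ⟨B, hB⟩ := Subbasis.exists_subset_indices hspan
    (linearIndepOn_support_of_mem_extremePoints hc)
  have hcoords : B.coords z = c := by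
    rw [← hc.1.2]
    exact Subbasis.coords_sum_smul fun i hi => notMem_support.1 fun hic => hi (hB hic)
  refine ⟨B, fun e => ?_, hcoords ▸ hc.1.1⟩
  let r : ι → ℝ := Pi.single e 1 - B.coords (a e)
  have hrel : ∑ i, r i • a i = 0 := by
    simp [r, sub_smul, Finset.sum_sub_distrib, B.sum_coords_smul, Pi.single_apply, ite_smul]
  have hneg : ∀ i, r i < 0 → 0 < c i := fun i hi => by
    have hiB : i ∈ B.indices := by
      by_contra hiB
      have hsingle : (0 : ι → ℝ) ≤ Pi.single e 1 := Pi.single_nonneg.2 zero_le_one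
      exact hi.not_ge (by simpa [r, Subbasis.coords_of_notMem _ hiB] using hsingle i)
    exact (hc.1.1 i).lt_of_ne' (hcoords ▸ hz B i hiB)
  obtain ⟨η, hη, hη0⟩ := ((eventually_add_smul_mem_feasibleSet hc.1 hrel hneg).and
    self_mem_nhdsWithin).exists
  have hle : cost c ≤ cost c + η * cost r := by simpa using hmin hη
  have hcost_r : cost r = B.reducedCost e w := by
    simp [hcost, r, sub_mul, Finset.sum_sub_distrib, Subbasis.reducedCost_apply, Pi.single_apply]
  rw [← hcost_r]
  exact nonneg_of_mul_nonneg_right (by linarith) hη0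

end LinearProgramming

section Genericity

variable {ι W : Type*} [AddCommGroup W] [Module ℝ W] {a : ι → W}

theorem dense_forall_apply_ne_zero {E κ : Type*} [NormedAddCommGroup E] [NormedSpace ℝ E]
    [FiniteDimensional ℝ E] [Countable κ] {φ : κ → E →ₗ[ℝ] ℝ} (hφ : ∀ k, φ k ≠ 0) :
    Dense {x | ∀ k, φ k x ≠ 0} := by
  have : CompleteSpace E := FiniteDimensional.complete ℝ E
  rw [Set.ofPred_forall]
  refine dense_iInter_of_isOpen (fun k => ?_) fun k => ?_
  · exact isOpen_ne_fun (φ k).continuous_of_finiteDimensional continuous_const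
  · refine interior_eq_empty_iff_dense_compl.1 (Set.not_nonempty_iff_eq_empty.1 fun hne => hφ k ?_)
    exact LinearMap.ker_eq_top.1 ((LinearMap.ker (φ k)).eq_top_of_nonempty_interior' hne)

theorem IsGeneric.eventually_add_smul [Finite ι] {q : W} (hq : IsGeneric a q) (x : W) :
    ∀ᶠ ε : ℝ in 𝓝[>] 0, IsGeneric a (x + ε • q) := by
  refine eventually_all.2 fun B => (eventually_all_finset _).2 fun i hi => ?_
  simpa using eventually_add_mul_ne_zero (B.coords x i) (hq B i hi)

theorem exists_isGeneric_mem_hull [Finite ι] (a : ι → W) :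
    ∃ q ∈ PointedCone.hull ℝ (Set.range a), IsGeneric a q := by
  classical
  have := Fintype.ofFinite ι
  let φ : (Σ B : Subbasis ℝ a, B.indices) → (ι → ℝ) →ₗ[ℝ] ℝ := fun k =>
    LinearMap.proj (k.2 : ι) ∘ₗ k.1.coords ∘ₗ Fintype.linearCombination ℝ a
  have hφ : ∀ k, φ k ≠ 0 := fun ⟨B, i⟩ h0 => by
    have hval := LinearMap.congr_fun h0 (Pi.single (i : ι) 1)
    simp [φ, Subbasis.coords_apply_self i.2] at hval
  obtain ⟨v, hgen, hv⟩ := (dense_forall_apply_ne_zero hφ).exists_mem_open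
    (isOpen_set_pi Set.finite_univ fun _ _ => isOpen_Ioi (a := (0 : ℝ))) ⟨1, by simp⟩
  refine ⟨_, mem_hull_range_iff_feasibleSet_nonempty.2 ⟨v, fun i => (hv i trivial).le, rfl⟩,
    fun B i hi => hgen ⟨B, i, hi⟩⟩

theorem exists_isGeneric_mem_hull_coords_neg [Finite ι] (B : Subbasis ℝ a) (e : ι) :
    ∃ q ∈ PointedCone.hull ℝ (Set.range a), IsGeneric a q ∧
      ∀ i, B.coords (a e) i < 0 → B.coords q i < 0 := by
  obtain ⟨q, hqcone, hq⟩ := exists_isGeneric_mem_hull a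
  have hneg : ∀ᶠ ε : ℝ in 𝓝[>] 0,
      ∀ i, B.coords (a e) i < 0 → B.coords (a e + ε • q) i < 0 := by
    refine eventually_all.2 fun i => eventually_imp_distrib_left.2 fun hi => ?_
    filter_upwards [eventually_pos_add_mul (neg_pos.2 hi) (-B.coords q i)] with ε hε
    simp only [map_add, map_smul, Pi.add_apply, Pi.smul_apply, smul_eq_mul]
    linarith
  obtain ⟨ε, ⟨hgen, hε⟩, hε0⟩ :=
    (((hq.eventually_add_smul (a e)).and hneg).and self_mem_nhdsWithin).exists
  exact ⟨a e + ε • q, add_mem (PointedCone.subset_hull ⟨e, rfl⟩)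
    (PointedCone.smul_mem _ (le_of_lt hε0) hqcone), hgen, hε⟩

/-- A weight for which every vector outside a subbasis has nonzero reduced cost; the regular
subdivision induced by such a weight is a triangulation. -/
def IsGenericWeight [Fintype ι] (a : ι → W) (w : ι → ℝ) : Prop :=
  ∀ B : Subbasis ℝ a, ∀ e ∉ B.indices, B.reducedCost e w ≠ 0

theorem Subbasis.exists_isGenericWeight_isOptimal [Fintype ι] (B₀ : Subbasis ℝ a) :
    ∃ w, IsGenericWeight a w ∧ B₀.IsOptimal w := by
  classical
  let φ : (Σ B : Subbasis ℝ a, {e // e ∉ B.indices}) → (ι → ℝ) →ₗ[ℝ] ℝ := fun k =>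
    k.1.reducedCost k.2
  have hφ : ∀ k, φ k ≠ 0 := fun ⟨B, e⟩ h0 => by
    have hval := LinearMap.congr_fun h0 (Pi.single (e : ι) 1)
    simp [φ, Subbasis.reducedCost_apply, Pi.single_apply, Subbasis.coords_of_notMem _ e.2] at hval
  have hopen : IsOpen {w | ∀ e ∉ B₀.indices, 0 < B₀.reducedCost e w} := by
    simp only [Set.ofPred_forall]
    exact isOpen_iInter_of_finite fun e => isOpen_iInter_of_finite fun _ =>
      isOpen_lt continuous_const (B₀.reducedCost e).continuous_of_finiteDimensional
  have hne : {w | ∀ e ∉ B₀.indices, 0 < B₀.reducedCost e w}.Nonempty := by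
    refine ⟨fun i => if i ∈ B₀.indices then 0 else 1, fun e he => ?_⟩
    have hzero : ∀ i, B₀.coords (a e) i * (if i ∈ B₀.indices then 0 else 1) = 0 := fun i => by
      split_ifs with hi
      · exact mul_zero _
      · rw [Subbasis.coords_of_notMem _ hi, zero_mul]
    simp only [Subbasis.reducedCost_apply, if_neg he, hzero]
    norm_num
  obtain ⟨w, hgen, hpos⟩ := (dense_forall_apply_ne_zero hφ).exists_mem_open hopen hne
  refine ⟨w, fun B e he => hgen ⟨B, e, he⟩, fun e => ?_⟩
  by_cases he : e ∈ B₀.indices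
  · rw [Subbasis.reducedCost_of_mem he, LinearMap.zero_apply]
  · exact (hpos e he).le

end Genericity

section HalfOpenCone

variable {ι W : Type*} [AddCommGroup W] [Module ℝ W] {a : ι → W}

/-- The simplicial cone over a subbasis without the facets whose hyperplanes separate it from `q`:
the points that an infinitesimal translation along `q` moves into the interior of the cone. -/
def Subbasis.halfOpenCone (B : Subbasis ℝ a) (q : W) : Set W :=
  {x | ∀ᶠ ε : ℝ in 𝓝[>] 0, ∀ i ∈ B.indices, 0 < B.coords (x + ε • q) i}

variable {B : Subbasis ℝ a} {q x y : W}

theorem mem_halfOpenCone : x ∈ B.halfOpenCone q ↔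
    ∀ᶠ ε : ℝ in 𝓝[>] 0, ∀ i ∈ B.indices, 0 < B.coords (x + ε • q) i :=
  Iff.rfl

theorem coords_nonneg_of_mem_halfOpenCone (hx : x ∈ B.halfOpenCone q) : 0 ≤ B.coords x := by
  intro i
  by_cases hi : i ∈ B.indices
  · by_contra! hneg
    obtain ⟨ε, hε, hε'⟩ :=
      ((mem_halfOpenCone.1 hx).and (eventually_pos_add_mul (neg_pos.2 hneg) (-B.coords q i))).exists
    have hpos : 0 < B.coords x i + ε * B.coords q i := by simpa using hε i hi
    linarith
  · exact (Subbasis.coords_of_notMem x hi).ge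

theorem add_mem_halfOpenCone (hx : x ∈ B.halfOpenCone q) (hy : 0 ≤ B.coords y) :
    x + y ∈ B.halfOpenCone q := by
  rw [mem_halfOpenCone] at hx ⊢
  filter_upwards [hx] with ε hε i hi
  rw [add_right_comm, map_add]
  exact add_pos_of_pos_of_nonneg (hε i hi) (hy i)

theorem mem_halfOpenCone_of_add_mem {i j : ι} (hi : i ∈ B.indices) (hj : j ∈ B.indices)
    (hij : i ≠ j) (hxi : x + a i ∈ B.halfOpenCone q) (hxj : x + a j ∈ B.halfOpenCone q) :
    x ∈ B.halfOpenCone q := by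
  classical
  rw [mem_halfOpenCone] at hxi hxj ⊢
  filter_upwards [hxi, hxj] with ε hεi hεj k hk
  have hεik := hεi k hk
  have hεjk := hεj k hk
  rw [add_right_comm, map_add, Subbasis.coords_apply_self hi] at hεik
  rw [add_right_comm, map_add, Subbasis.coords_apply_self hj] at hεjk
  rcases eq_or_ne k i with rfl | hki
  · simpa [hij] using hεjk
  · simpa [hki] using hεik

theorem sub_mem_halfOpenCone {i : ι} (hi : i ∈ B.indices) (hx : x ∈ B.halfOpenCone q)
    (hone : 1 < B.coords x i) : x - a i ∈ B.halfOpenCone q := by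
  classical
  rw [mem_halfOpenCone] at hx ⊢
  filter_upwards [hx, eventually_pos_add_mul (sub_pos.2 hone) (B.coords q i)] with ε hε hεi k hk
  rw [sub_add_eq_add_sub, map_sub, Subbasis.coords_apply_self hi]
  rcases eq_or_ne k i with rfl | hki
  · simpa [sub_add_eq_add_sub] using hεi
  · simpa [hki] using hε k hk

theorem mem_halfOpenCone_iff (hq : IsGeneric a q) :
    x ∈ B.halfOpenCone q ↔ 0 ≤ B.coords x ∧ ∀ i, B.coords q i < 0 → 0 < B.coords x i := by
  refine ⟨fun hx => ⟨coords_nonneg_of_mem_halfOpenCone hx, fun i hqi => ?_⟩,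
    fun ⟨hnonneg, hx⟩ => ?_⟩
  · have hi : i ∈ B.indices := by
      by_contra hi
      exact hqi.ne (Subbasis.coords_of_notMem q hi)
    obtain ⟨ε, hε, hε0⟩ := ((mem_halfOpenCone.1 hx).and self_mem_nhdsWithin).exists
    have hpos : 0 < B.coords x i + ε * B.coords q i := by simpa using hε i hi
    have hneg : ε * B.coords q i < 0 := mul_neg_of_pos_of_neg hε0 hqi
    linarith
  · refine mem_halfOpenCone.2 <| (eventually_all_finset _).2 fun i hi => ?_
    simp only [map_add, map_smul, Pi.add_apply, Pi.smul_apply, smul_eq_mul]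
    rcases (hnonneg i).eq_or_lt with h0 | hpos
    · have hqi : 0 < B.coords q i :=
        (hq B i hi).lt_or_gt.resolve_left fun hqi => (hx i hqi).ne h0
      filter_upwards [self_mem_nhdsWithin] with ε hε
      rw [← h0, Pi.zero_apply, zero_add]
      exact mul_pos hε hqi
    · exact eventually_pos_add_mul hpos _

theorem eventually_exists_coords_nonpos (hx : x ∉ B.halfOpenCone q) :
    ∀ᶠ ε : ℝ in 𝓝[>] 0, ∃ i ∈ B.indices, B.coords (x + ε • q) i ≤ 0 := by
  simp only [mem_halfOpenCone, eventually_all_finset, not_forall] at hx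
  obtain ⟨i, hi, hxi⟩ := hx
  simp only [map_add, map_smul, Pi.add_apply, Pi.smul_apply, smul_eq_mul] at hxi ⊢
  filter_upwards [(eventually_pos_or_eventually_nonpos _ _).resolve_left hxi] with ε hε
  exact ⟨i, hi, hε⟩

section Lattice

variable {L : AddSubgroup W} (hL : ∀ i, a i ∈ L)
include hL

theorem coords_le_one_of_mem_translationGenerators
    (hx : x ∈ translationGenerators a B.indices (L ∩ B.halfOpenCone q)) : B.coords x ≤ 1 := by
  intro i
  by_cases hi : i ∈ B.indices
  · by_contra! hone
    exact hx.2 i hi ⟨sub_mem hx.1.1 (hL i), sub_mem_halfOpenCone hi hx.1.2 hone⟩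
  · rw [Subbasis.coords_of_notMem x hi]
    exact zero_le_one

/-- The generators in the sum are those opposite to the facets removed by `q`. -/
theorem sum_mem_translationGenerators [Fintype ι] (hq : IsGeneric a q) :
    ∑ i with B.coords q i < 0, a i ∈
      translationGenerators a B.indices (L ∩ B.halfOpenCone q) := by
  classical
  set x := ∑ i with B.coords q i < 0, a i with hx
  have hcoords : B.coords x = fun i => if B.coords q i < 0 then 1 else 0 := by
    rw [← Subbasis.coords_sum_smul (B := B) (c := fun i => if B.coords q i < 0 then 1 else 0), hx]
    · simp [Finset.sum_filter, ite_smul]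
    · exact fun i hi => if_neg (Subbasis.coords_of_notMem q hi).not_lt
  refine ⟨⟨sum_mem fun i _ => hL i, (mem_halfOpenCone_iff hq).2 ⟨?_, ?_⟩⟩, fun j hj hxj => ?_⟩
  · intro i
    rw [hcoords]
    dsimp only
    split_ifs <;> norm_num
  · intro i hi
    simp [hcoords, hi]
  · obtain ⟨hnonneg, hpos⟩ := (mem_halfOpenCone_iff hq).1 hxj.2
    have hstep : B.coords (x - a j) j = (if B.coords q j < 0 then 1 else 0) - 1 := by
      rw [map_sub, hcoords, Subbasis.coords_apply_self hj, Pi.sub_apply, Pi.single_eq_same]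
    have hnonneg_j := hnonneg j
    by_cases hqj : B.coords q j < 0
    · simpa [hstep, hqj] using hpos j hqj
    · rw [hstep, if_neg hqj, Pi.zero_apply] at hnonneg_j
      norm_num at hnonneg_j

end Lattice

theorem coords_nonneg_of_forall_pos (hpos : ∀ i ∈ B.indices, 0 < B.coords x i) :
    0 ≤ B.coords x := fun i => by
  by_cases hi : i ∈ B.indices
  · exact (hpos i hi).le
  · exact (Subbasis.coords_of_notMem x hi).ge

variable [Fintype ι]

theorem exists_isOptimal_mem_halfOpenCone (hspan : Submodule.span ℝ (Set.range a) = ⊤)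
    {h : W →ₗ[ℝ] ℝ} (ha : ∀ i, h (a i) = 1) (w : ι → ℝ)
    (hqcone : q ∈ PointedCone.hull ℝ (Set.range a)) (hq : IsGeneric a q)
    (hx : x ∈ PointedCone.hull ℝ (Set.range a)) :
    ∃ B : Subbasis ℝ a, B.IsOptimal w ∧ x ∈ B.halfOpenCone q := by
  have hcover : ∀ᶠ ε : ℝ in 𝓝[>] 0, ∃ B : Subbasis ℝ a, B.IsOptimal w ∧
      ∀ i ∈ B.indices, 0 < B.coords (x + ε • q) i := by
    filter_upwards [hq.eventually_add_smul x, self_mem_nhdsWithin] with ε hgen hε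
    obtain ⟨B, hB, hnonneg⟩ := exists_isOptimal_coords_nonneg hspan ha w hgen
      (add_mem hx (PointedCone.smul_mem _ (le_of_lt hε) hqcone))
    exact ⟨B, hB, fun i hi => (hnonneg i).lt_of_ne' (hgen B i hi)⟩
  by_contra! hnot
  have hout : ∀ᶠ ε : ℝ in 𝓝[>] 0, ∀ B : Subbasis ℝ a, B.IsOptimal w →
      ∃ i ∈ B.indices, B.coords (x + ε • q) i ≤ 0 := by
    refine eventually_all.2 fun B => eventually_imp_distrib_left.2 fun hB => ?_
    exact eventually_exists_coords_nonpos (hnot B hB)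
  obtain ⟨ε, ⟨B, hB, hpos⟩, hε⟩ := (hcover.and hout).exists
  obtain ⟨i, hi, hle⟩ := hε B hB
  exact (hpos i hi).not_ge hle

theorem sum_coords_mul_reducedCost_add (B B' : Subbasis ℝ a) (x : W) (w : ι → ℝ) :
    ∑ e, B.coords x e * B'.reducedCost e w + ∑ e, B'.coords x e * B.reducedCost e w = 0 := by
  have hB := B'.sum_mul_eq_add_sum_mul_reducedCost (B.coords x) w
  have hB' := B.sum_mul_eq_add_sum_mul_reducedCost (B'.coords x) w
  rw [Subbasis.sum_coords_smul] at hB hB'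
  linarith

theorem indices_subset_of_isOptimal {w : ι → ℝ} (hw : IsGenericWeight a w) {B' : Subbasis ℝ a}
    (hB : B.IsOptimal w) (hB' : B'.IsOptimal w) (hpos : ∀ i ∈ B.indices, 0 < B.coords x i)
    (hpos' : ∀ i ∈ B'.indices, 0 < B'.coords x i) : B.indices ⊆ B'.indices := by
  have hterm : ∀ e, 0 ≤ B.coords x e * B'.reducedCost e w := fun e =>
    mul_nonneg (coords_nonneg_of_forall_pos hpos e) (hB' e)
  have hterm' : ∀ e, 0 ≤ B'.coords x e * B.reducedCost e w := fun e =>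
    mul_nonneg (coords_nonneg_of_forall_pos hpos' e) (hB e)
  have hsum : ∑ e, B.coords x e * B'.reducedCost e w = 0 := by
    have hnonneg := Finset.sum_nonneg fun e (_ : e ∈ Finset.univ) => hterm e
    have hnonneg' := Finset.sum_nonneg fun e (_ : e ∈ Finset.univ) => hterm' e
    linarith [sum_coords_mul_reducedCost_add B B' x w]
  intro e he
  by_contra he'
  exact mul_ne_zero (hpos e he).ne' (hw B' e he')
    ((Finset.sum_eq_zero_iff_of_nonneg fun e _ => hterm e).1 hsum e (Finset.mem_univ e))

theorem eq_of_mem_halfOpenCone {w : ι → ℝ} (hw : IsGenericWeight a w) {B' : Subbasis ℝ a}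
    (hB : B.IsOptimal w) (hB' : B'.IsOptimal w) (hx : x ∈ B.halfOpenCone q)
    (hx' : x ∈ B'.halfOpenCone q) : B = B' := by
  obtain ⟨ε, hε, hε'⟩ := ((mem_halfOpenCone.1 hx).and (mem_halfOpenCone.1 hx')).exists
  exact Subbasis.ext ((indices_subset_of_isOptimal hw hB hB' hε hε').antisymm
    (indices_subset_of_isOptimal hw hB' hB hε' hε))

end HalfOpenCone

section HStar

/-- The generating function counting the points of `L` in the cone over `p` by their height `h`,
cleared of the denominator `(1 - X) ^ r` with `r` the dimension of the cone. For the cone over a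
lattice polytope and the height given by its dilation factor this is the δ-polynomial. -/
noncomputable def hStarSeries {ι V : Type*} [AddCommGroup V] [Module ℝ V] (p : ι → V)
    (h : V →ₗ[ℝ] ℝ) (L : AddSubgroup V) : PowerSeries ℤ :=
  (1 - PowerSeries.X) ^ Module.finrank ℝ (Submodule.span ℝ (Set.range p)) *
    levelSeries h (L ∩ PointedCone.hull ℝ (Set.range p))

section Spanning

variable {ι W : Type*} [AddCommGroup W] [Module ℝ W] {a : ι → W} {h : W →ₗ[ℝ] ℝ}
  {L : AddSubgroup W} {q : W}

theorem halfOpenCone_subset_hull [Finite ι] (B : Subbasis ℝ a) :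
    B.halfOpenCone q ⊆ PointedCone.hull ℝ (Set.range a) := fun x hx =>
  have := Fintype.ofFinite ι
  mem_hull_range_iff_feasibleSet_nonempty.2
    ⟨B.coords x, coords_nonneg_of_mem_halfOpenCone hx, B.sum_coords_smul x⟩

variable (ha : ∀ i, h (a i) = 1) (hL : ∀ i, a i ∈ L)
  (hfin : ∀ n : ℕ, {x ∈ (L : Set W) ∩ PointedCone.hull ℝ (Set.range a) | h x = n}.Finite)
include ha

theorem height_le_finrank_of_coords_le_one [Finite ι] (B : Subbasis ℝ a) {x : W}
    (hx : B.coords x ≤ 1) : h x ≤ Module.finrank ℝ W := by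
  have := Fintype.ofFinite ι
  rw [← B.sum_coords ha, ← B.card_eq_finrank, Finset.cast_card,
    ← Finset.sum_subset (Finset.subset_univ B.indices)
      fun i _ hi => Subbasis.coords_of_notMem x hi]
  exact Finset.sum_le_sum fun i _ => hx i

include hL hfin

theorem one_sub_X_pow_finrank_mul_levelSeries_halfOpenCone [Finite ι] (B : Subbasis ℝ a) :
    (1 - PowerSeries.X) ^ Module.finrank ℝ W * levelSeries h (L ∩ B.halfOpenCone q) =
      levelSeries h (translationGenerators a B.indices (L ∩ B.halfOpenCone q)) := by
  classical
  rw [← B.card_eq_finrank]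
  refine one_sub_X_pow_mul_levelSeries (fun j hj x hx => ?_) (fun i hi j hj hij x hxi hxj => ?_)
    (fun j _ x => by rw [map_add, ha]) (fun x hx => ?_) fun n => ?_
  · refine ⟨add_mem hx.1 (hL j), add_mem_halfOpenCone hx.2 ?_⟩
    rw [Subbasis.coords_apply_self hj]
    exact Pi.single_nonneg.2 zero_le_one
  · exact ⟨(L.add_mem_cancel_right (hL i)).1 hxi.1,
      mem_halfOpenCone_of_add_mem hi hj hij hxi.2 hxj.2⟩
  · have := Fintype.ofFinite ι
    rw [← B.sum_coords ha]
    exact Finset.sum_nonneg fun i _ => coords_nonneg_of_mem_halfOpenCone hx.2 i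
  · exact (hfin n).subset fun x hx => ⟨⟨hx.1.1, halfOpenCone_subset_hull B hx.1.2⟩, hx.2⟩

theorem hStarSeries_eq_sum [Fintype ι] (hspan : Submodule.span ℝ (Set.range a) = ⊤)
    {w : ι → ℝ} (hw : IsGenericWeight a w) (hqcone : q ∈ PointedCone.hull ℝ (Set.range a))
    (hq : IsGeneric a q) [Fintype {B : Subbasis ℝ a // B.IsOptimal w}] :
    hStarSeries a h L = ∑ B : {B : Subbasis ℝ a // B.IsOptimal w},
      levelSeries h (translationGenerators a B.1.indices (L ∩ B.1.halfOpenCone q)) := by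
  have hunion : (L : Set W) ∩ PointedCone.hull ℝ (Set.range a) =
      ⋃ B : {B : Subbasis ℝ a // B.IsOptimal w}, L ∩ B.1.halfOpenCone q := by
    refine Set.Subset.antisymm (fun x hx => ?_)
      (Set.iUnion_subset fun B => Set.inter_subset_inter_right _ (halfOpenCone_subset_hull B.1))
    obtain ⟨B, hB, hxB⟩ := exists_isOptimal_mem_halfOpenCone hspan ha w hqcone hq hx.2
    exact Set.mem_iUnion_of_mem ⟨B, hB⟩ ⟨hx.1, hxB⟩
  have hdisj : Pairwise (Disjoint on fun B : {B : Subbasis ℝ a // B.IsOptimal w} =>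
      (L : Set W) ∩ B.1.halfOpenCone q) := fun B B' hne =>
    Set.disjoint_left.2 fun x hx hx' =>
      hne (Subtype.ext (eq_of_mem_halfOpenCone hw B.2 B'.2 hx.2 hx'.2))
  rw [hStarSeries, hspan, finrank_top, hunion, levelSeries_iUnion (hunion ▸ hfin) hdisj,
    Finset.mul_sum]
  exact Finset.sum_congr rfl fun B _ =>
    one_sub_X_pow_finrank_mul_levelSeries_halfOpenCone ha hL hfin B.1

theorem coeff_hStarSeries_eq_zero_of_span_eq_top [Finite ι]
    (hspan : Submodule.span ℝ (Set.range a) = ⊤) {n : ℕ} (hn : Module.finrank ℝ W < n) :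
    PowerSeries.coeff n (hStarSeries a h L) = 0 := by
  have := Fintype.ofFinite ι
  obtain ⟨B₀, -⟩ := Subbasis.exists_subset_indices hspan (linearIndepOn_empty ℝ a)
  obtain ⟨w, hw, -⟩ := B₀.exists_isGenericWeight_isOptimal
  obtain ⟨q, hqcone, hq⟩ := exists_isGeneric_mem_hull a
  have := Fintype.ofFinite {B : Subbasis ℝ a // B.IsOptimal w}
  rw [hStarSeries_eq_sum ha hL hfin hspan hw hqcone hq, map_sum]
  refine Finset.sum_eq_zero fun B _ => ?_
  have hempty : {x ∈ translationGenerators a B.1.indices (L ∩ B.1.halfOpenCone q) | h x = n} =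
      ∅ := by
    refine Set.eq_empty_of_forall_notMem fun x ⟨hx, hxn⟩ => ?_
    have hle := height_le_finrank_of_coords_le_one ha B.1
      (coords_le_one_of_mem_translationGenerators hL hx)
    rw [hxn, Nat.cast_le] at hle
    exact hle.not_gt hn
  rw [coeff_levelSeries, hempty, Set.ncard_empty, Nat.cast_zero]

theorem exists_card_le_coeff_hStarSeries_ne_zero [Fintype ι]
    (hspan : Submodule.span ℝ (Set.range a) = ⊤)
    (B : Subbasis ℝ a) (e : ι) :
    ∃ n, #{i | B.coords (a e) i < 0} ≤ n ∧ PowerSeries.coeff n (hStarSeries a h L) ≠ 0 := by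
  obtain ⟨w, hw, hB⟩ := B.exists_isGenericWeight_isOptimal
  obtain ⟨q, hqcone, hq, hneg⟩ := exists_isGeneric_mem_hull_coords_neg B e
  have := Fintype.ofFinite {B : Subbasis ℝ a // B.IsOptimal w}
  refine ⟨#{i | B.coords q i < 0},
    Finset.card_le_card (Finset.monotone_filter_right _ fun i _ => hneg i), ?_⟩
  rw [hStarSeries_eq_sum ha hL hfin hspan hw hqcone hq, map_sum]
  refine (Finset.sum_pos' (fun B' _ => ?_) ⟨⟨B, hB⟩, Finset.mem_univ _, ?_⟩).ne'
  · rw [coeff_levelSeries]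
    exact Nat.cast_nonneg _
  · rw [coeff_levelSeries, Nat.cast_pos, Set.ncard_pos ((hfin _).subset fun x hx =>
      ⟨⟨hx.1.1.1, halfOpenCone_subset_hull B hx.1.1.2⟩, hx.2⟩)]
    exact ⟨_, sum_mem_translationGenerators hL hq, by simp [ha]⟩

end Spanning

variable {ι V : Type*} [AddCommGroup V] [Module ℝ V] {p : ι → V} {h : V →ₗ[ℝ] ℝ}
  {L : AddSubgroup V}

/-- The family `p`, viewed in its own linear span. -/
def spanRestrict (p : ι → V) (i : ι) : Submodule.span ℝ (Set.range p) :=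
  ⟨p i, Submodule.subset_span ⟨i, rfl⟩⟩

theorem span_range_spanRestrict (p : ι → V) :
    Submodule.span ℝ (Set.range (spanRestrict p)) = ⊤ := by
  rw [← Submodule.span_span_coe_preimage]
  congr 1
  ext x
  simp [spanRestrict, Subtype.ext_iff]

theorem coe_preimage_hull_range [Finite ι] (p : ι → V) :
    ((↑) : Submodule.span ℝ (Set.range p) → V) ⁻¹' PointedCone.hull ℝ (Set.range p) =
      PointedCone.hull ℝ (Set.range (spanRestrict p)) := by
  have := Fintype.ofFinite ι
  ext x
  rw [Set.mem_preimage, SetLike.mem_coe, SetLike.mem_coe, mem_hull_range_iff_feasibleSet_nonempty,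
    mem_hull_range_iff_feasibleSet_nonempty]
  simp [feasibleSet, spanRestrict, Subtype.ext_iff]

theorem hStarSeries_spanRestrict [Finite ι] :
    hStarSeries (spanRestrict p) (h.domRestrict _)
      (L.comap (Submodule.span ℝ (Set.range p)).subtype.toAddMonoidHom) = hStarSeries p h L := by
  have hrange : (L : Set V) ∩ PointedCone.hull ℝ (Set.range p) ⊆
      Set.range ((↑) : Submodule.span ℝ (Set.range p) → V) := by
    rw [Subtype.range_coe]
    exact fun x hx => PointedCone.hull_le_span _ _ hx.2
  rw [hStarSeries, hStarSeries, span_range_spanRestrict, finrank_top, ← coe_preimage_hull_range,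
    ← levelSeries_preimage Subtype.val_injective hrange]
  rfl

variable [Finite ι]
  (hfin : ∀ n : ℕ, {x ∈ (L : Set V) ∩ PointedCone.hull ℝ (Set.range p) | h x = n}.Finite)

include hfin in
theorem finite_level_spanRestrict (n : ℕ) :
    {x ∈ (L.comap (Submodule.span ℝ (Set.range p)).subtype.toAddMonoidHom :
        Set (Submodule.span ℝ (Set.range p))) ∩
      (PointedCone.hull ℝ (Set.range (spanRestrict p)) : Set _) |
        h.domRestrict _ x = n}.Finite := by
  rw [← coe_preimage_hull_range]
  exact (hfin n).preimage Subtype.val_injective.injOn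

variable (hp : ∀ i, h (p i) = 1) (hL : ∀ i, p i ∈ L)
include hp hL hfin

theorem coeff_hStarSeries_eq_zero {n : ℕ}
    (hn : Module.finrank ℝ (Submodule.span ℝ (Set.range p)) < n) :
    PowerSeries.coeff n (hStarSeries p h L) = 0 := by
  rw [← hStarSeries_spanRestrict]
  exact coeff_hStarSeries_eq_zero_of_span_eq_top (a := spanRestrict p) hp hL
    (finite_level_spanRestrict hfin)
    (span_range_spanRestrict p) hn

theorem exists_card_neg_le_coeff_hStarSeries_ne_zero {κ : Type*} [Fintype κ] {f : κ → ι}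
    (hf : LinearIndependent ℝ (p ∘ f)) {β : κ → ℝ} {e : ι} (hβ : ∑ k, β k • p (f k) = p e) :
    ∃ n, #{k | β k < 0} ≤ n ∧ PowerSeries.coeff n (hStarSeries p h L) ≠ 0 := by
  classical
  have := Fintype.ofFinite ι
  have hfinj : Injective f := Injective.of_comp hf.injective
  have hind : LinearIndepOn ℝ (spanRestrict p) (Set.range f) := by
    rw [linearIndepOn_range_iff hfinj]
    exact LinearIndependent.of_comp (Submodule.subtype _) hf
  obtain ⟨B, hB⟩ := Subbasis.exists_subset_indices (span_range_spanRestrict p) hind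
  have hcoords : ∀ k, B.coords (spanRestrict p e) (f k) = β k := fun k => by
    have he : spanRestrict p e = ∑ k, β k • spanRestrict p (f k) :=
      Subtype.ext (by simp [spanRestrict, hβ])
    simp [he, Subbasis.coords_apply_self (hB (Set.mem_range_self _)), Pi.single_apply,
      hfinj.eq_iff]
  obtain ⟨n, hn, hne⟩ := exists_card_le_coeff_hStarSeries_ne_zero (a := spanRestrict p)
    hp hL (finite_level_spanRestrict hfin) (span_range_spanRestrict p) B e
  rw [hStarSeries_spanRestrict] at hne
  refine ⟨n, le_trans (Finset.card_le_card_of_injOn f (fun k hk => ?_) hfinj.injOn) hn, hne⟩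
  simpa [hcoords] using hk

end HStar

section LatticePolytope

theorem mem_smul_convexHull_range_iff {ι E : Type*} [Finite ι] [Nonempty ι] [AddCommGroup E]
    [Module ℝ E] {p : ι → E} {h : E →ₗ[ℝ] ℝ} (hp : ∀ i, h (p i) = 1) {t : ℝ} (ht : 0 ≤ t) {x : E} :
    x ∈ t • convexHull ℝ (Set.range p) ↔ x ∈ PointedCone.hull ℝ (Set.range p) ∧ h x = t := by
  constructor
  · rintro ⟨y, hy, rfl⟩
    have hsubset : convexHull ℝ (Set.range p) ⊆
        (PointedCone.hull ℝ (Set.range p) : Set E) ∩ {y | h y = 1} :=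
      convexHull_min
        (Set.range_subset_iff.2 fun i => ⟨PointedCone.subset_hull (Set.mem_range_self i), hp i⟩)
        ((PointedCone.convex _).inter (convex_hyperplane h.isLinear 1))
    obtain ⟨hcone, hy1 : h y = 1⟩ := hsubset hy
    exact ⟨PointedCone.smul_mem _ ht hcone, by simp [hy1]⟩
  · have := Fintype.ofFinite ι
    rintro ⟨hx, hxt⟩
    obtain ⟨c, hc, rfl⟩ := mem_hull_range_iff_feasibleSet_nonempty.1 hx
    have hsum : ∑ i, c i = t := by simpa [hp] using hxt
    rcases ht.eq_or_lt with rfl | ht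
    · have hc0 : ∀ i, c i = 0 := by
        simpa using (Finset.sum_eq_zero_iff_of_nonneg fun i _ => hc i).1 hsum
      rw [Set.zero_smul_set (Set.range_nonempty p).convexHull]
      simp [hc0]
    · refine (Set.mem_smul_set_iff_inv_smul_mem₀ ht.ne' _ _).2 ?_
      rw [Finset.smul_sum]
      simp only [smul_smul]
      refine (convex_convexHull ℝ _).sum_mem (fun i _ => mul_nonneg (inv_nonneg.2 ht.le) (hc i)) ?_
        fun i _ => subset_convexHull ℝ _ (Set.mem_range_self i)
      rw [← Finset.mul_sum, hsum, inv_mul_cancel₀ ht.ne']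

theorem finrank_vectorSpan_add_one {E : Type*} [AddCommGroup E] [Module ℝ E]
    [FiniteDimensional ℝ E] {s : Set E} (hs : s.Nonempty) {h : E →ₗ[ℝ] ℝ}
    (hone : ∀ x ∈ s, h x = 1) :
    Module.finrank ℝ (vectorSpan ℝ s) + 1 = Module.finrank ℝ (Submodule.span ℝ s) := by
  obtain ⟨x₀, hx₀⟩ := hs
  have hker : vectorSpan ℝ s ≤ LinearMap.ker h := by
    rw [vectorSpan_def, Submodule.span_le]
    rintro _ ⟨x, hx, y, hy, rfl⟩
    simp [hone x hx, hone y hy]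
  have hnot : x₀ ∉ vectorSpan ℝ s := fun hmem => by
    simpa [hone x₀ hx₀] using hker hmem
  have hsup : vectorSpan ℝ s ⊔ Submodule.span ℝ {x₀} = Submodule.span ℝ s := by
    refine le_antisymm ?_ (Submodule.span_le.2 fun x hx => ?_)
    · rw [sup_le_iff, Submodule.span_singleton_le_iff_mem, vectorSpan_def, Submodule.span_le]
      refine ⟨?_, Submodule.subset_span hx₀⟩
      rintro _ ⟨x, hx, y, hy, rfl⟩
      exact sub_mem (Submodule.subset_span hx) (Submodule.subset_span hy)
    · rw [← sub_add_cancel x x₀]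
      exact Submodule.add_mem_sup (vsub_mem_vectorSpan ℝ hx hx₀)
        (Submodule.mem_span_singleton_self _)
  rw [← Submodule.finrank_sup_span_singleton hnot, hsup]

theorem coeff_one_sub_X_pow {R : Type*} [CommRing R] (n j : ℕ) :
    PowerSeries.coeff j ((1 - PowerSeries.X : PowerSeries R) ^ n) = (-1) ^ j * n.choose j :=
  calc PowerSeries.coeff j ((1 - PowerSeries.X : PowerSeries R) ^ n)
    _ = PowerSeries.coeff j (PowerSeries.rescale (-1 : R)
          (((1 + Polynomial.X) ^ n : Polynomial R) : PowerSeries R)) := by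
        simp [sub_eq_add_neg]
    _ = (-1) ^ j * n.choose j := by
        rw [PowerSeries.coeff_rescale, Polynomial.coeff_coe, Polynomial.coeff_one_add_X_pow]

variable {N : ℕ}

theorem deltaCoeff_eq_coeff (P : Set (Fin N → ℝ)) (i : ℕ) :
    deltaCoeff P i = PowerSeries.coeff i ((1 - PowerSeries.X) ^ (polyDim P + 1) *
      PowerSeries.mk fun n => (ehr P n : ℤ)) := by
  rw [PowerSeries.coeff_mul, Finset.Nat.sum_antidiagonal_eq_sum_range_succ_mk, deltaCoeff]
  exact Finset.sum_congr rfl fun j _ => by rw [coeff_one_sub_X_pow, PowerSeries.coeff_mk]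

/-- The lattice `ℤᴺ` inside `ℝᴺ`. -/
def integerLattice (N : ℕ) : AddSubgroup (Fin N → ℝ) :=
  ((Int.castAddHom ℝ).compLeft (Fin N)).range

theorem finite_integerLattice_inter {K : Set (Fin N → ℝ)} (hK : IsCompact K) :
    ((integerLattice N : Set (Fin N → ℝ)) ∩ K).Finite := by
  have hemb : IsClosedEmbedding ((Int.castAddHom ℝ).compLeft (Fin N)) :=
    IsClosedEmbedding.piMap fun _ => Int.isClosedEmbedding_coe_real
  refine ((isCompact_iff_finite.1 (hemb.isCompact_preimage hK)).image
    ((Int.castAddHom ℝ).compLeft (Fin N))).subset ?_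
  rintro _ ⟨⟨z, rfl⟩, hz⟩
  exact ⟨z, hz, rfl⟩

theorem ehr_eq_ncard {P : Set (Fin N → ℝ)} (hP : P.Nonempty) (n : ℕ) :
    ehr P n = ((integerLattice N : Set (Fin N → ℝ)) ∩ (n : ℝ) • P).ncard := by
  rcases eq_or_ne n 0 with rfl | hn
  · have hzero : (integerLattice N : Set (Fin N → ℝ)) ∩ 0 = {0} :=
      Set.inter_eq_right.2 (Set.singleton_subset_iff.2 (zero_mem _))
    rw [ehr, if_pos rfl, Nat.cast_zero, Set.zero_smul_set hP, hzero, Set.ncard_singleton]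
  · have hinj : Injective ((Int.castAddHom ℝ).compLeft (Fin N)) :=
      Int.cast_injective.comp_left
    have himage : (integerLattice N : Set (Fin N → ℝ)) ∩ (n : ℝ) • P =
        (Int.castAddHom ℝ).compLeft (Fin N) '' {z | (fun i => (z i : ℝ)) ∈ (n : ℝ) • P} := by
      rw [integerLattice, AddMonoidHom.coe_range, Set.inter_comm,
        ← Set.image_preimage_eq_inter_range]
      rfl
    rw [ehr, if_neg hn, himage, Set.ncard_image_of_injective _ hinj, ← Nat.card_coe_set_eq]
    rfl

variable {ι : Type*} [Finite ι] [Nonempty ι] {p : ι → Fin N → ℝ} {h : (Fin N → ℝ) →ₗ[ℝ] ℝ}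
  (hp : ∀ i, h (p i) = 1)
include hp

theorem level_hull_range_eq_inter_smul_convexHull (n : ℕ) :
    {x ∈ (integerLattice N : Set (Fin N → ℝ)) ∩ PointedCone.hull ℝ (Set.range p) | h x = n} =
      (integerLattice N : Set (Fin N → ℝ)) ∩ (n : ℝ) • convexHull ℝ (Set.range p) := by
  ext x
  rw [Set.mem_inter_iff, mem_smul_convexHull_range_iff hp n.cast_nonneg]
  exact and_assoc

theorem finite_level_integerLattice (n : ℕ) :
    {x ∈ (integerLattice N : Set (Fin N → ℝ)) ∩ PointedCone.hull ℝ (Set.range p) |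
      h x = n}.Finite := by
  rw [level_hull_range_eq_inter_smul_convexHull hp]
  exact finite_integerLattice_inter (((Set.finite_range p).isCompact_convexHull ℝ).smul _)

theorem deltaCoeff_convexHull_range (i : ℕ) :
    deltaCoeff (convexHull ℝ (Set.range p)) i =
      PowerSeries.coeff i (hStarSeries p h (integerLattice N)) := by
  have hdim : polyDim (convexHull ℝ (Set.range p)) + 1 =
      Module.finrank ℝ (Submodule.span ℝ (Set.range p)) := by
    rw [polyDim, affineSpan_convexHull, direction_affineSpan]
    exact finrank_vectorSpan_add_one (Set.range_nonempty p) (Set.forall_mem_range.2 hp)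
  rw [deltaCoeff_eq_coeff, hdim, hStarSeries, levelSeries]
  simp only [ehr_eq_ncard (Set.range_nonempty p).convexHull,
    level_hull_range_eq_inter_smul_convexHull hp]

theorem card_neg_le_polyDeg (hL : ∀ i, p i ∈ integerLattice N) {κ : Type*} [Fintype κ] {f : κ → ι}
    (hf : LinearIndependent ℝ (p ∘ f)) {β : κ → ℝ} {e : ι} (hβ : ∑ k, β k • p (f k) = p e) :
    #{k | β k < 0} ≤ polyDeg (convexHull ℝ (Set.range p)) := by
  have hbdd : BddAbove {i | deltaCoeff (convexHull ℝ (Set.range p)) i ≠ 0} := by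
    refine ⟨Module.finrank ℝ (Submodule.span ℝ (Set.range p)), fun i hi => ?_⟩
    by_contra! hlt
    exact hi ((deltaCoeff_convexHull_range hp i).trans
      (coeff_hStarSeries_eq_zero (finite_level_integerLattice hp) hp hL hlt))
  obtain ⟨n, hn, hne⟩ := exists_card_neg_le_coeff_hStarSeries_ne_zero
    (finite_level_integerLattice hp) hp hL hf hβ
  exact hn.trans (le_csSup hbdd ((deltaCoeff_convexHull_range hp n).trans_ne hne))

end LatticePolytope

section EvenCycle

theorem linearIndependent_castSucc_add_succ {R M : Type*} [Ring R] [AddCommGroup M] [Module R M]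
    {m : ℕ} {p : Fin (m + 1) → M} (hp : LinearIndependent R p) :
    LinearIndependent R fun i : Fin m => p i.castSucc + p i.succ := by
  refine Fintype.linearIndependent_iff.2 fun g hg => ?_
  have hsum : ∑ j, ((Fin.snoc g 0 : Fin (m + 1) → R) j + (Fin.cons 0 g : Fin (m + 1) → R) j) •
      p j = 0 := by
    simpa [add_smul, Finset.sum_add_distrib, Fin.sum_univ_castSucc (n := m) (fun j =>
      (Fin.snoc g 0 : Fin (m + 1) → R) j • p j), Fin.sum_univ_succ (n := m) (fun j =>
      (Fin.cons 0 g : Fin (m + 1) → R) j • p j)] using hg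
  have hcoeff := Fintype.linearIndependent_iff.1 hp _ hsum
  have hcons : ∀ j, (Fin.cons 0 g : Fin (m + 1) → R) j = 0 := fun j => by
    induction j using Fin.induction with
    | zero => rfl
    | succ i ih => simpa [ih] using hcoeff i.castSucc
  exact fun i => hcons i.succ

theorem sum_range_neg_one_pow_smul_add {R M : Type*} [Ring R] [AddCommGroup M] [Module R M]
    (p : ℕ → M) (m : ℕ) :
    ∑ i ∈ Finset.range m, (-1 : R) ^ i • (p i + p (i + 1)) = p 0 - (-1 : R) ^ m • p m := by
  induction m with
  | zero => simp
  | succ m ih =>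
    rw [Finset.sum_range_succ, ih, pow_succ, mul_neg_one, neg_smul, smul_add]
    abel

theorem le_card_neg_one_pow_neg {R : Type*} [Ring R] [LinearOrder R] [IsStrictOrderedRing R]
    (m : ℕ) : m / 2 ≤ #{i : Fin m | (-1 : R) ^ (i : ℕ) < 0} := by
  rw [← Fintype.card_fin (m / 2), ← Finset.card_univ]
  refine Finset.card_le_card_of_injOn (fun j => ⟨2 * j + 1, by lia⟩) (fun j _ => ?_)
    fun j _ j' _ h => ?_
  · simp [pow_succ]
  · simpa [Fin.ext_iff] using h

variable {N : ℕ}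

theorem rho_mk {x y : Fin N} (hxy : x ≠ y) : rho s(x, y) = Pi.single x 1 + Pi.single y 1 := by
  ext v
  simp only [rho, Sym2.mem_iff, Pi.add_apply, Pi.single_apply]
  by_cases hx : v = x
  · simp [hx, hxy]
  · simp [hx]

theorem rho_mem_integerLattice (e : Sym2 (Fin N)) : rho e ∈ integerLattice N := by
  classical
  refine ⟨fun v => if v ∈ e then 1 else 0, ?_⟩
  ext v
  simp [rho]

/-- Half the sum of the coordinates, the height function equal to `1` on all edge vectors. -/
noncomputable def halfSum (N : ℕ) : (Fin N → ℝ) →ₗ[ℝ] ℝ :=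
  (2⁻¹ : ℝ) • ∑ v, LinearMap.proj v

theorem halfSum_rho {e : Sym2 (Fin N)} (he : ¬e.IsDiag) : halfSum N (rho e) = 1 := by
  induction e with
  | _ x y =>
    rw [Sym2.mk_isDiag_iff] at he
    norm_num [rho_mk he, halfSum, Finset.sum_add_distrib]

theorem card_neg_le_polyDeg_edgePolytope {G : SimpleGraph (Fin N)} {κ : Type*} [Fintype κ]
    {f : κ → G.edgeSet} (hf : LinearIndependent ℝ fun k => rho (f k : Sym2 (Fin N))) {β : κ → ℝ}
    {e : G.edgeSet} (hβ : ∑ k, β k • rho (f k : Sym2 (Fin N)) = rho (e : Sym2 (Fin N))) :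
    #{k | β k < 0} ≤ polyDeg (edgePolytope G) := by
  have : Nonempty G.edgeSet := ⟨e⟩
  rw [edgePolytope, Set.image_eq_range]
  exact card_neg_le_polyDeg (p := fun e : G.edgeSet => rho (e : Sym2 (Fin N))) (h := halfSum N)
    (fun e => halfSum_rho (G.not_isDiag_of_mem_edgeSet e.2)) (fun _ => rho_mem_integerLattice _)
    hf hβ

theorem half_le_polyDeg_edgePolytope_of_closing_edge {G : SimpleGraph (Fin N)} {u : ℕ → Fin N}
    {m : ℕ} (hm : Odd m) (hadj : ∀ i < m, G.Adj (u i) (u (i + 1)))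
    (hinj : Set.InjOn u (Set.Iic m)) (hclose : G.Adj (u 0) (u m)) :
    m / 2 ≤ polyDeg (edgePolytope G) := by
  let f : Fin m → G.edgeSet := fun i => ⟨s(u i, u (i + 1)), hadj i i.2⟩
  let q : ℕ → Fin N → ℝ := fun i => Pi.single (u i) 1
  have hrho : ∀ i : Fin m, rho (f i : Sym2 (Fin N)) = q i + q (i + 1) := fun i =>
    rho_mk (hadj i i.2).ne
  have hind : LinearIndependent ℝ fun i => rho (f i : Sym2 (Fin N)) := by
    have hu : Injective fun j : Fin (m + 1) => u j := fun j j' h =>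
      Fin.ext (hinj (Nat.le_of_lt_succ j.2) (Nat.le_of_lt_succ j'.2) h)
    simp only [hrho]
    exact linearIndependent_castSucc_add_succ
      ((Pi.linearIndependent_single_one (Fin N) ℝ).comp _ hu)
  have hsum : ∑ i : Fin m, (-1 : ℝ) ^ (i : ℕ) • rho (f i : Sym2 (Fin N)) = rho s(u 0, u m) :=
    calc ∑ i : Fin m, (-1 : ℝ) ^ (i : ℕ) • rho (f i : Sym2 (Fin N))
      _ = ∑ i ∈ Finset.range m, (-1 : ℝ) ^ i • (q i + q (i + 1)) := by
          simp only [hrho]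
          exact Fin.sum_univ_eq_sum_range (fun i => (-1 : ℝ) ^ i • (q i + q (i + 1))) m
      _ = q 0 - (-1 : ℝ) ^ m • q m := sum_range_neg_one_pow_smul_add q m
      _ = q 0 + q m := by rw [hm.neg_one_pow, neg_one_smul, sub_neg_eq_add]
      _ = rho s(u 0, u m) := (rho_mk hclose.ne).symm
  exact (le_card_neg_one_pow_neg m).trans
    (card_neg_le_polyDeg_edgePolytope (e := ⟨s(u 0, u m), hclose⟩) hind hsum)

theorem polyDeg_ge_three_of_long_even_cycle_with_chord_general (G : SimpleGraph (Fin N))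
    {v : Fin N} (c : G.Walk v v) (hc : c.IsCycle) (heven : Even c.length) :
    c.length ≤ 2 * (polyDeg (edgePolytope G) + 1) := by
  obtain ⟨m, hm⟩ := Nat.exists_eq_add_of_le' (Nat.one_le_of_lt hc.three_le_length)
  have hodd : Odd m := by
    rwa [hm, Nat.even_add_one, Nat.not_even_iff_odd] at heven
  have hadj : ∀ i < m + 1, G.Adj (c.getVert i) (c.getVert (i + 1)) := fun i hi =>
    c.adj_getVert_succ (hm ▸ hi)
  have hinj : Set.InjOn c.getVert (Set.Iic m) :=
    hc.getVert_injOn'.mono fun i (hi : i ≤ m) => by simpa [hm] using hi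
  have hclose : G.Adj (c.getVert 0) (c.getVert m) := by
    have hlast : c.getVert (m + 1) = c.getVert 0 := by
      rw [← hm, c.getVert_length, c.getVert_zero]
    exact hlast ▸ (hadj m m.lt_succ_self).symm
  have hle := half_le_polyDeg_edgePolytope_of_closing_edge hodd
    (fun i hi => hadj i (hi.trans m.lt_succ_self)) hinj hclose
  lia

end EvenCycle

/-- If a finite connected simple graph `G` has an even cycle of
length `≥ 8` possessing a chord, and `G` has no `4`-cycle, then `deg(P_G) ≥ 3`. -/
theorem polyDeg_ge_three_of_long_even_cycle_with_chord
    {N : ℕ} (G : SimpleGraph (Fin N)) (hG : G.Connected)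
    {v : Fin N} (c : G.Walk v v) (hc : c.IsCycle)
    (heven : Even c.length) (hlen : 8 ≤ c.length)
    (hchord : ∃ x y, x ∈ c.support ∧ y ∈ c.support ∧ G.Adj x y ∧ s(x, y) ∉ c.edges)
    (h4 : ¬ ∃ (u : Fin N) (w : G.Walk u u), w.IsCycle ∧ w.length = 4) :
    3 ≤ polyDeg (edgePolytope G) := by
  have hbound := polyDeg_ge_three_of_long_even_cycle_with_chord_general G c hc heven
  lia
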